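/- Fix a prime p, positive integers u, d with u ≥ 2 if p = 2, set Γ = CS(u,d,p) and Γ_n = CS(u+n−1,d,p), and let k be a field of characteristic p. Let a be a nonzero element of k[Γ], and for each n ≥ 1 let α_n : k[Γ/Γ_n] → k[Γ/Γ_n] be the k-linear map given by left multiplication by the image of a under the natural ring homomorphism k[Γ] → k[Γ/Γ_n]. Then (dim_k ker α_n)/[Γ : Γ_n] → 0 as n → ∞. -/

import Mathlib

/-!
Write `G = Γ/Γ_n`, `q = p^(n-1)`, `N = d²`, and let `J` be the augmentation ideal of `k[G]`.
The idea is that the graded ring of the `J`-adic filtration of `k[G]` is the truncated polynomial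
ring `k[X_1, …, X_N]/(X_i^q)`, with `X_i` the class of `b_i = g_i - 1` for the generators
`g = 1 + p^u E_{ab}`; in it, multiplication by a fixed form of degree `s` has a kernel of
dimension at most `q^N - (q - s)^N = o(q^N)`.

* Every element of `CS(i+1)` is a `p`-th power of an element of `CS(i)` up to a factor in `CS(i+2)`
  (`exists_pow_mul`), and `x^p - 1 = (x - 1)^p` in characteristic `p`. Hence `x ∈ CS(u+j)` implies
  `x - 1 ∈ J^(p^j)` (`of_sub_one_mem_augPow`). As commutators of `Γ` lie in `CS(2u)`, the `b_i`
  commute modulo `J^3`; this is where `u ≥ 2` is needed for `p = 2`. As `Γ/CS(u+1)` is additively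
  the space of matrices mod `p`, the `b_i` span `J` modulo `J^2` (`of_sub_one_mem_span`). Finally
  `b_i^q = g_i^q - 1 = 0`.
* So the monomials in the `b_i` with exponents less than `q` span `k[G]`, `J` being nilpotent because
  `G` is a finite `p`-group (`augPow_nilpotent`). There are `q^N = |G|` of them (`card_quotient`),
  so they form a basis adapted to the filtration (`CommFilt.linearIndependent_box`).
* If `x ∈ J^s` and `x ∉ J^(s+1)`, let `f` be its leading form, a homogeneous polynomial of degree
  `s`. Comparing lexicographic leading monomials shows that `x` times the monomials with
  exponents less than `q - s` are linearly independent (`CommFilt.le_finrank_range`).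
* The degree `s` stays bounded as `n` grows: the image of `a` is nonzero in some `k[Γ/Γ_m]`, where
  `J^t = 0` for some `t`, so the image of `a` in `k[Γ/Γ_n]` is not in `J^t` for any `n ≥ m`
  (`exists_notMem_augPow`).
-/

/-- The reduction homomorphism `GL_d(ℤ_p) →* GL_d(ℤ_p/p^i)` obtained by reducing every
matrix entry modulo `p^i`. -/
noncomputable def csRed (p : ℕ) [Fact p.Prime] (i d : ℕ) :
    (Matrix (Fin d) (Fin d) ℤ_[p])ˣ →*
      (Matrix (Fin d) (Fin d) (ℤ_[p] ⧸ Ideal.span {(p : ℤ_[p]) ^ i}))ˣ :=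
  Units.map
    (RingHom.toMonoidHom
      (RingHom.mapMatrix (Ideal.Quotient.mk (Ideal.span {(p : ℤ_[p]) ^ i}))))

/-- The congruence subgroup `CS(i,d,p)`: the subgroup of `GL_d(ℤ_p)` consisting of the
matrices congruent to the identity modulo `p^i`, i.e. the kernel of reduction mod `p^i`. -/
noncomputable def CS (p : ℕ) [Fact p.Prime] (i d : ℕ) :
    Subgroup (Matrix (Fin d) (Fin d) ℤ_[p])ˣ :=
  (csRed p i d).ker


/-- `Γ_n = CS(u+n-1,d,p)`, viewed as the (automatically normal) subgroup of `Γ = CS(u,d,p)`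
given by the kernel of the reduction map modulo `p^(u+n-1)` restricted to `CS(u,d,p)`. -/
noncomputable def csSub (p : ℕ) [Fact p.Prime] (u d n : ℕ) : Subgroup ↥(CS p u d) :=
  ((csRed p (u + n - 1) d).comp (CS p u d).subtype).ker

instance (p : ℕ) [Fact p.Prime] (u d n : ℕ) : (csSub p u d n).Normal :=
  MonoidHom.normal_ker _

/-- The natural ring homomorphism `k[Γ] → k[Γ/Γ_n]`. -/
noncomputable def csQuotHom (k : Type*) [CommRing k] (p : ℕ) [Fact p.Prime] (u d n : ℕ) :
    MonoidAlgebra k ↥(CS p u d) →+* MonoidAlgebra k (↥(CS p u d) ⧸ csSub p u d n) :=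
  MonoidAlgebra.mapDomainRingHom k (QuotientGroup.mk' (csSub p u d n))



/-! ### Algebras with a filtration that is commutative to leading order -/

/-- A multiplicative filtration `F` of a `k`-algebra whose graded ring is commutative and generated
over `k` by the classes of the elements `b i` in degree one. Commutativity is encoded by
`b i * b j - b j * b i ∈ F 3`, generation by the three inclusions `top_le`, `succ_le`, `one_le`. -/
structure CommFilt {k A ι : Type*} [Field k] [Ring A] [Algebra k A]
    (F : ℕ → Submodule k A) (b : ι → A) : Prop where
  zero_eq_top : F 0 = ⊤
  anti : Antitone F
  mul_mem : ∀ {m l : ℕ} {x y : A}, x ∈ F m → y ∈ F l → x * y ∈ F (m + l)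
  top_le : ⊤ ≤ Submodule.span k {(1 : A)} ⊔ F 1
  succ_le : ∀ m : ℕ, F (m + 1) ≤ F m * F 1
  one_le : F 1 ≤ Submodule.span k (Set.range b) ⊔ F 2
  mem_one : ∀ i, b i ∈ F 1
  comm : ∀ i j, b i * b j - b j * b i ∈ F 3

/-- The monomial `∏ b i ^ γ i`, multiplied in an arbitrary but fixed order of the factors. -/
noncomputable def monoProd {A ι : Type*} [Ring A] (b : ι → A) (γ : ι →₀ ℕ) : A :=
  ((Finsupp.toMultiset γ).toList.map b).prod

/-- The linear map that sends the monomial `X ^ γ` to `monoProd b γ`. It is multiplicative only to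
leading order, see `CommFilt.monoMap_mul`. -/
noncomputable def monoMap (k : Type*) {A ι : Type*} [Field k] [Ring A] [Algebra k A] (b : ι → A) :
    MvPolynomial ι k →ₗ[k] A :=
  (MvPolynomial.basisMonomials ι k).constr k (monoProd b)

namespace CommFilt

variable {k A ι : Type*} [Field k] [Ring A] [Algebra k A]
  {F : ℕ → Submodule k A} {b : ι → A}

theorem monoMap_monomial (γ : ι →₀ ℕ) (c : k) :
    monoMap k b (MvPolynomial.monomial γ c) = c • monoProd b γ := by
  have h : MvPolynomial.monomial γ c = c • (MvPolynomial.basisMonomials ι k) γ := by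
    simp [MvPolynomial.smul_monomial]
  rw [h, map_smul, monoMap, Module.Basis.constr_basis]

theorem monoMap_eq_sum (f : MvPolynomial ι k) :
    monoMap k b f = ∑ γ ∈ f.support, f.coeff γ • monoProd b γ := by
  conv_lhs => rw [f.as_sum, map_sum]
  simp_rw [monoMap_monomial]

theorem prod_mem (h : CommFilt F b) (l : List ι) : (l.map b).prod ∈ F l.length := by
  induction l with
  | nil => simp [h.zero_eq_top]
  | cons i l ih =>
    simp only [List.map_cons, List.prod_cons, List.length_cons]
    rw [add_comm]
    exact h.mul_mem (h.mem_one i) ih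

/-- Reordering the factors of a product of `b i`s changes it only in higher filtration. -/
theorem prod_perm (h : CommFilt F b) {l₁ l₂ : List ι} (hp : l₁.Perm l₂) :
    (l₁.map b).prod - (l₂.map b).prod ∈ F (l₁.length + 1) := by
  induction hp with
  | nil => simp
  | cons i _ ih =>
    simp only [List.map_cons, List.prod_cons, List.length_cons]
    rw [← mul_sub, add_right_comm, add_comm]
    rw [add_comm _ 1] at *
    exact h.mul_mem (h.mem_one i) (by simpa [add_comm] using ih)
  | swap i j l =>
    simp only [List.map_cons, List.prod_cons, List.length_cons]
    rw [← mul_assoc, ← mul_assoc, ← sub_mul]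
    have := h.mul_mem (h.comm j i) (h.prod_mem l)
    exact h.anti (by omega) this
  | trans h1 _ ih1 ih2 =>
    rw [← h1.length_eq] at ih2
    simpa using add_mem ih1 ih2

theorem length_toList (γ : ι →₀ ℕ) : (Finsupp.toMultiset γ).toList.length = γ.degree := by
  rw [Multiset.length_toList, Finsupp.card_toMultiset]
  rfl

theorem monoProd_mem (h : CommFilt F b) (γ : ι →₀ ℕ) : monoProd b γ ∈ F γ.degree := by
  rw [← length_toList]
  exact h.prod_mem _

theorem monoProd_mul (h : CommFilt F b) (β γ : ι →₀ ℕ) :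
    monoProd b β * monoProd b γ - monoProd b (β + γ) ∈ F (β.degree + γ.degree + 1) := by
  have hp : ((Finsupp.toMultiset β).toList ++ (Finsupp.toMultiset γ).toList).Perm
      (Finsupp.toMultiset (β + γ)).toList := by
    rw [← Multiset.coe_eq_coe, ← Multiset.coe_add]
    simp
  have := h.prod_perm hp
  rw [List.length_append, length_toList, length_toList, List.map_append, List.prod_append] at this
  exact this

theorem monoProd_single (i : ι) (n : ℕ) : monoProd b (Finsupp.single i n) = b i ^ n := by
  have : (n • ({i} : Multiset ι)).toList = List.replicate n i := by
    rw [Multiset.nsmul_singleton, ← Multiset.coe_replicate]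
    rw [← List.perm_replicate, ← Multiset.coe_eq_coe]
    simp
  rw [monoProd, Finsupp.toMultiset_single, this]
  simp

theorem monoProd_mem_of_le (h : CommFilt F b) {q : ℕ} (hb : ∀ i, b i ^ q = 0)
    {γ : ι →₀ ℕ} {i : ι} (hi : q ≤ γ i) : monoProd b γ ∈ F (γ.degree + 1) := by
  obtain ⟨δ, rfl⟩ : ∃ δ, γ = Finsupp.single i q + δ :=
    exists_add_of_le (by simpa using hi)
  have := h.monoProd_mul (Finsupp.single i q) δ
  rw [monoProd_single, hb, zero_mul, zero_sub, neg_mem_iff] at this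
  simpa using this

theorem monoMap_mem (h : CommFilt F b) {f : MvPolynomial ι k} {m : ℕ}
    (hf : ∀ γ ∈ f.support, m ≤ γ.degree) : monoMap k b f ∈ F m := by
  rw [monoMap_eq_sum]
  exact sum_mem fun γ hγ => Submodule.smul_mem _ _ (h.anti (hf γ hγ) (h.monoProd_mem γ))

theorem degree_eq {f : MvPolynomial ι k} {m : ℕ} (hf : f.IsHomogeneous m) {γ : ι →₀ ℕ}
    (hγ : γ ∈ f.support) : γ.degree = m := by
  rw [Finsupp.degree_eq_weight_one]
  exact hf (MvPolynomial.mem_support_iff.1 hγ)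

theorem monoMap_mul (h : CommFilt F b) {f g : MvPolynomial ι k} {s m : ℕ}
    (hf : f.IsHomogeneous s) (hg : g.IsHomogeneous m) :
    monoMap k b f * monoMap k b g - monoMap k b (f * g) ∈ F (s + m + 1) := by
  have h1 : monoMap k b (f * g) = ∑ γ ∈ f.support, ∑ δ ∈ g.support,
      (f.coeff γ * g.coeff δ) • monoProd b (γ + δ) := by
    conv_lhs => rw [f.as_sum, g.as_sum, Finset.sum_mul_sum, map_sum]
    simp_rw [map_sum, MvPolynomial.monomial_mul, monoMap_monomial]
  rw [h1, monoMap_eq_sum f, monoMap_eq_sum g, Finset.sum_mul_sum, ← Finset.sum_sub_distrib]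
  refine sum_mem fun γ hγ => ?_
  rw [← Finset.sum_sub_distrib]
  refine sum_mem fun δ hδ => ?_
  rw [smul_mul_smul_comm, ← smul_sub]
  have := h.monoProd_mul γ δ
  rw [degree_eq hf hγ, degree_eq hg hδ] at this
  exact Submodule.smul_mem _ _ this

/-- Every element of `F m` agrees with a form of degree `m` in the `b i` modulo `F (m + 1)`. -/
theorem exists_homogeneous (h : CommFilt F b) (m : ℕ) : ∀ x ∈ F m,
    ∃ f : MvPolynomial ι k, f.IsHomogeneous m ∧ x - monoMap k b f ∈ F (m + 1) := by
  have key : F m ≤ (MvPolynomial.homogeneousSubmodule ι k m).map (monoMap k b) ⊔ F (m + 1) := by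
    induction m with
    | zero =>
      rw [h.zero_eq_top]
      refine h.top_le.trans (sup_le_sup_right ?_ _)
      rw [Submodule.span_singleton_le_iff_mem]
      refine ⟨MvPolynomial.monomial 0 1, MvPolynomial.isHomogeneous_monomial _ (by simp), ?_⟩
      rw [monoMap_monomial]
      simp [monoProd]
    | succ m ih =>
      refine (h.succ_le m).trans (Submodule.mul_le.2 fun x hx y hy => ?_)
      obtain ⟨_, ⟨f, hf, rfl⟩, x', hx', rfl⟩ := Submodule.mem_sup.1 (ih hx)
      have hone : Submodule.span k (Set.range b) ≤
          (MvPolynomial.homogeneousSubmodule ι k 1).map (monoMap k b) := by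
        rw [Submodule.span_le]
        rintro _ ⟨i, rfl⟩
        refine ⟨MvPolynomial.monomial (Finsupp.single i 1) 1,
          MvPolynomial.isHomogeneous_monomial _ (by simp), ?_⟩
        rw [monoMap_monomial, monoProd_single]
        simp
      obtain ⟨_, ⟨g, hg, rfl⟩, y', hy', rfl⟩ :=
        Submodule.mem_sup.1 (sup_le_sup_right hone _ (h.one_le hy))
      have hf' : f.IsHomogeneous m := hf
      have hg' : g.IsHomogeneous 1 := hg
      have hgF : monoMap k b g ∈ F 1 := h.monoMap_mem fun γ hγ => (degree_eq hg' hγ).ge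
      have hfF : monoMap k b f ∈ F m := h.monoMap_mem fun γ hγ => (degree_eq hf' hγ).ge
      refine Submodule.mem_sup.2 ⟨_, ⟨f * g, hf'.mul hg', rfl⟩,
        (monoMap k b f * monoMap k b g - monoMap k b (f * g)) + monoMap k b f * y'
          + x' * (monoMap k b g + y'), ?_, by noncomm_ring⟩
      refine add_mem (add_mem (h.monoMap_mul hf' hg') (h.anti (by omega) (h.mul_mem hfF hy'))) ?_
      exact h.anti (by omega) (h.mul_mem hx' (add_mem hgF (h.anti (by omega) hy')))
  intro x hx
  obtain ⟨_, ⟨f, hf, rfl⟩, x', hx', rfl⟩ := Submodule.mem_sup.1 (key hx)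
  exact ⟨f, hf, by simpa using hx'⟩


/-! ### The adapted monomial basis and the rank bound -/

variable [Fintype ι] {q : ℕ}

/-- A tuple of numbers below `r`, viewed as an exponent vector. -/
noncomputable def boxExp {r : ℕ} (γ : ι → Fin r) : ι →₀ ℕ := Finsupp.equivFunOnFinite.symm fun i => (γ i : ℕ)

@[simp] theorem boxExp_apply {r : ℕ} (γ : ι → Fin r) (i : ι) : boxExp γ i = γ i := rfl

theorem boxExp_injective {r : ℕ} : Function.Injective (boxExp : (ι → Fin r) → ι →₀ ℕ) := by
  intro γ δ hγ
  ext i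
  simpa using DFunLike.congr_fun hγ i

theorem exists_boxExp {γ : ι →₀ ℕ} (h : ∀ i, γ i < q) : ∃ δ : ι → Fin q, boxExp δ = γ :=
  ⟨fun i => ⟨γ i, h i⟩, by ext i; rfl⟩

/-- If `b i ^ q = 0` and the filtration is finite, the monomials of degree at least `m` with all
exponents below `q` span `F m`. -/
theorem le_span_box (h : CommFilt F b) (hb : ∀ i, b i ^ q = 0) {M : ℕ} (hM : F M = ⊥) (m : ℕ) :
    F m ≤ Submodule.span k
      ((fun γ : ι → Fin q => monoProd b (boxExp γ)) '' {γ | m ≤ (boxExp γ).degree}) := by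
  suffices H : ∀ j m, M ≤ m + j → F m ≤ Submodule.span k
      ((fun γ : ι → Fin q => monoProd b (boxExp γ)) '' {γ | m ≤ (boxExp γ).degree}) from
    H M m (by omega)
  intro j
  induction j with
  | zero =>
    intro m hm
    exact (h.anti hm).trans (hM ▸ bot_le)
  | succ j ih =>
    intro m hm x hx
    have hsub : F (m + 1) ≤ Submodule.span k
        ((fun γ : ι → Fin q => monoProd b (boxExp γ)) '' {γ | m ≤ (boxExp γ).degree}) :=
      (ih (m + 1) (by omega)).trans (Submodule.span_mono (Set.image_mono fun γ hγ =>
        (Nat.le_succ m).trans hγ))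
    obtain ⟨f, hf, hxf⟩ := h.exists_homogeneous m x hx
    rw [← sub_add_cancel x (monoMap k b f)]
    refine add_mem (hsub hxf) ?_
    rw [monoMap_eq_sum]
    refine sum_mem fun γ hγ => Submodule.smul_mem _ _ ?_
    have hdeg := degree_eq hf hγ
    by_cases hbox : ∀ i, γ i < q
    · obtain ⟨δ, rfl⟩ := exists_boxExp hbox
      exact Submodule.subset_span ⟨δ, hdeg.ge, rfl⟩
    · push Not at hbox
      obtain ⟨i, hi⟩ := hbox
      have := h.monoProd_mem_of_le hb hi
      rw [hdeg] at this
      exact hsub this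

theorem linearIndependent_box [Module.Finite k A] (h : CommFilt F b) (hb : ∀ i, b i ^ q = 0)
    {M : ℕ} (hM : F M = ⊥) (hcard : Module.finrank k A = q ^ Fintype.card ι) :
    LinearIndependent k (fun γ : ι → Fin q => monoProd b (boxExp γ)) := by
  classical
  refine linearIndependent_of_top_le_span_of_card_eq_finrank ?_ (by simp [hcard])
  have := h.le_span_box hb hM 0
  rw [h.zero_eq_top] at this
  exact this.trans (Submodule.span_mono (Set.image_subset_range _ _))

/-- A form of degree `t` whose value lies in `F (t + 1)` has no monomial with all exponents
below `q`: the graded ring has no relations beyond `X i ^ q = 0`. -/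
theorem coeff_eq_zero [Module.Finite k A] (h : CommFilt F b) (hb : ∀ i, b i ^ q = 0)
    {M : ℕ} (hM : F M = ⊥) (hcard : Module.finrank k A = q ^ Fintype.card ι)
    {f : MvPolynomial ι k} {t : ℕ} (hf : f.IsHomogeneous t) (hft : monoMap k b f ∈ F (t + 1))
    {δ : ι →₀ ℕ} (hδ : ∀ i, δ i < q) : f.coeff δ = 0 := by
  classical
  by_contra hne
  have hsupp : δ ∈ f.support := MvPolynomial.mem_support_iff.2 hne
  have hdeg := degree_eq hf hsupp
  obtain ⟨ε, rfl⟩ := exists_boxExp hδ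
  have hsub : F (t + 1) ≤ Submodule.span k
      ((fun γ : ι → Fin q => monoProd b (boxExp γ)) '' {ε}ᶜ) :=
    (h.le_span_box hb hM (t + 1)).trans (Submodule.span_mono (Set.image_mono fun γ hγ => by
      rintro rfl
      have : t + 1 ≤ _ := hγ
      omega))
  refine (h.linearIndependent_box hb hM hcard).notMem_span_image (s := {ε}ᶜ) (x := ε)
    (by simp) ?_
  have hsum := hsub hft
  rw [monoMap_eq_sum, ← Finset.add_sum_erase _ _ hsupp] at hsum
  have hrest : ∑ γ ∈ f.support.erase (boxExp ε), f.coeff γ • monoProd b γ ∈ Submodule.span k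
      ((fun γ : ι → Fin q => monoProd b (boxExp γ)) '' {ε}ᶜ) := by
    refine sum_mem fun γ hγ => Submodule.smul_mem _ _ ?_
    obtain ⟨hγne, hγ⟩ := Finset.mem_erase.1 hγ
    have hdeg' := degree_eq hf hγ
    by_cases hbox : ∀ i, γ i < q
    · obtain ⟨γ, rfl⟩ := exists_boxExp hbox
      exact Submodule.subset_span ⟨γ, fun hh => hγne (by rw [hh]), rfl⟩
    · push Not at hbox
      obtain ⟨i, hi⟩ := hbox
      have := h.monoProd_mem_of_le hb hi
      rw [hdeg'] at this
      exact hsub this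
  have := (Submodule.add_mem_iff_left _ hrest).1 hsum
  exact (Submodule.smul_mem_iff _ hne).1 this

/-- The form in `exists_homogeneous` can be chosen reduced, with all exponents below `q`. -/
theorem exists_homogeneous_box (h : CommFilt F b) (hb : ∀ i, b i ^ q = 0) {s : ℕ} {x : A}
    (hx : x ∈ F s) : ∃ f : MvPolynomial ι k, f.IsHomogeneous s ∧
      x - monoMap k b f ∈ F (s + 1) ∧ ∀ γ ∈ f.support, ∀ i, γ i < q := by
  classical
  obtain ⟨f, hf, hxf⟩ := h.exists_homogeneous s x hx
  let g : MvPolynomial ι k :=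
    ∑ γ ∈ f.support with ∀ i, γ i < q, MvPolynomial.monomial γ (f.coeff γ)
  have hcoeff : ∀ γ, g.coeff γ = if ∀ i, γ i < q then f.coeff γ else 0 := by
    intro γ
    simp only [g, MvPolynomial.coeff_sum, MvPolynomial.coeff_monomial, Finset.sum_ite_eq',
      Finset.mem_filter, MvPolynomial.mem_support_iff]
    split_ifs <;> simp_all
  refine ⟨g, ?_, ?_, ?_⟩
  · refine MvPolynomial.IsHomogeneous.sum _ _ _ fun γ hγ => ?_
    exact MvPolynomial.isHomogeneous_monomial _ (degree_eq hf (Finset.mem_filter.1 hγ).1)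
  · have hsplit : monoMap k b f = monoMap k b g +
        ∑ γ ∈ f.support with ¬ ∀ i, γ i < q, f.coeff γ • monoProd b γ := by
      simp only [g, map_sum, monoMap_monomial]
      rw [Finset.sum_filter_add_sum_filter_not, monoMap_eq_sum]
    have : x - monoMap k b g = (x - monoMap k b f) +
        ∑ γ ∈ f.support with ¬ ∀ i, γ i < q, f.coeff γ • monoProd b γ := by
      rw [hsplit]; abel
    rw [this]
    refine add_mem hxf (sum_mem fun γ hγ => Submodule.smul_mem _ _ ?_)
    obtain ⟨hγ, hi⟩ := Finset.mem_filter.1 hγ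
    push Not at hi
    obtain ⟨i, hi⟩ := hi
    have := h.monoProd_mem_of_le hb hi
    rwa [degree_eq hf hγ] at this
  · intro γ hγ
    rw [MvPolynomial.mem_support_iff, hcoeff] at hγ
    by_contra hh
    simp [hh] at hγ

/-- The rank bound: left multiplication by an element of exact filtration degree `s` is injective
on the span of the monomials with all exponents below `q - s`. -/
theorem le_finrank_range [LinearOrder ι] [Module.Finite k A] (h : CommFilt F b)
    (hb : ∀ i, b i ^ q = 0)
    {M : ℕ} (hM : F M = ⊥) (hcard : Module.finrank k A = q ^ Fintype.card ι)
    {s : ℕ} {x : A} (hx : x ∈ F s) (hx' : x ∉ F (s + 1)) :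
    (q - s) ^ Fintype.card ι ≤ Module.finrank k (LinearMap.range (LinearMap.mulLeft k x)) := by
  classical
  obtain ⟨f, hf, hxf, hbox⟩ := h.exists_homogeneous_box hb hx
  have hf0 : f ≠ 0 := by
    rintro rfl
    exact hx' (by simpa using hxf)
  have hfF : monoMap k b f ∈ F s := h.monoMap_mem fun γ hγ => (degree_eq hf hγ).ge
  let o : MonomialOrder ι := MonomialOrder.lex
  have key : LinearIndependent k (fun γ : ι → Fin (q - s) => x * monoProd b (boxExp γ)) := by
    rw [Fintype.linearIndependent_iff]
    intro c hc
    let e : MvPolynomial ι k := ∑ γ : ι → Fin (q - s), MvPolynomial.monomial (boxExp γ) (c γ)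
    have hcoeff : ∀ γ, e.coeff (boxExp γ) = c γ := by
      intro γ
      simp [e, MvPolynomial.coeff_sum, MvPolynomial.coeff_monomial, boxExp_injective.eq_iff]
    have hesupp : ∀ γ ∈ e.support, ∀ i, γ i < q - s := by
      intro γ hγ
      have := MvPolynomial.support_sum hγ
      rw [Finset.mem_biUnion] at this
      obtain ⟨δ, -, hδ⟩ := this
      have := Finset.mem_singleton.1 (MvPolynomial.support_monomial_subset hδ)
      subst this
      intro i
      exact (δ i).2
    have hxe : x * monoMap k b e = 0 := by
      rw [← hc]
      simp [e, monoMap_monomial, Finset.mul_sum]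
    suffices he : e = 0 by
      intro γ
      rw [← hcoeff, he, MvPolynomial.coeff_zero]
    by_contra he
    -- `e'` is the lowest-degree form of `e`, so `x * e` has leading form `f * e'`
    obtain ⟨γ₀, hγ₀, hmin⟩ := Finset.exists_min_image e.support (fun γ => γ.degree)
      (MvPolynomial.support_nonempty.2 he)
    let m := γ₀.degree
    let e' := MvPolynomial.homogeneousComponent m e
    have he'h : e'.IsHomogeneous m := MvPolynomial.homogeneousComponent_isHomogeneous _ _
    have he'0 : e' ≠ 0 := by
      intro h0
      have : e'.coeff γ₀ = e.coeff γ₀ := by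
        simp [e', m, MvPolynomial.coeff_homogeneousComponent]
      rw [h0] at this
      exact MvPolynomial.mem_support_iff.1 hγ₀ (by simpa using this.symm)
    have heF : monoMap k b e ∈ F m := h.monoMap_mem hmin
    have hdiff : monoMap k b e - monoMap k b e' ∈ F (m + 1) := by
      rw [← map_sub]
      refine h.monoMap_mem fun γ hγ => ?_
      rw [MvPolynomial.mem_support_iff, MvPolynomial.coeff_sub,
        MvPolynomial.coeff_homogeneousComponent] at hγ
      split_ifs at hγ with hd
      · simp at hγ
      · have := hmin γ (MvPolynomial.mem_support_iff.2 (by simpa using hγ))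
        have h2 : m ≠ γ.degree := fun hh => hd hh.symm
        have h3 : m ≤ γ.degree := this
        omega
    have hprod : monoMap k b (f * e') ∈ F (s + m + 1) := by
      have hid : monoMap k b (f * e') = x * monoMap k b e
          - (x - monoMap k b f) * monoMap k b e
          - monoMap k b f * (monoMap k b e - monoMap k b e')
          - (monoMap k b f * monoMap k b e' - monoMap k b (f * e')) := by
        noncomm_ring
      rw [hid, hxe, zero_sub]
      refine sub_mem (sub_mem (neg_mem ?_) ?_) (h.monoMap_mul hf he'h)
      · exact h.anti (by omega) (h.mul_mem hxf heF)
      · exact h.anti (by omega) (h.mul_mem hfF hdiff)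
    have hdf : o.degree f ∈ f.support := o.degree_mem_support hf0
    have hde : o.degree e' ∈ e'.support := o.degree_mem_support he'0
    have hde' : o.degree e' ∈ e.support := by
      rw [MvPolynomial.support_homogeneousComponent] at hde
      exact (Finset.mem_filter.1 hde).1
    -- the exponents of the leading monomial of `f` are at most `s`, those of `e'` below `q - s`
    have hz := h.coeff_eq_zero hb hM hcard (hf.mul he'h) hprod
      (δ := o.degree f + o.degree e') (by
        intro i
        have h1 := hesupp _ hde' i
        have h2 : o.degree f i ≤ s := by
          rw [← degree_eq hf hdf]
          exact Finsupp.le_degree i _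
        rw [Finsupp.add_apply]
        omega)
    rw [o.coeff_mul_of_degree_add] at hz
    rcases mul_eq_zero.1 hz with h0 | h0
    · exact hf0 (o.leadingCoeff_eq_zero_iff.1 h0)
    · exact he'0 (o.leadingCoeff_eq_zero_iff.1 h0)
  have hkey : LinearIndependent k (fun γ : ι → Fin (q - s) =>
      (⟨x * monoProd b (boxExp γ), ⟨_, rfl⟩⟩ : LinearMap.range (LinearMap.mulLeft k x))) :=
    LinearIndependent.of_comp (LinearMap.range (LinearMap.mulLeft k x)).subtype key
  simpa using hkey.fintype_card_le_finrank

end CommFilt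

/-! ### The augmentation filtration of a group algebra -/

section Aug

variable (k : Type*) [Field k] (G : Type*) [Group G]

/-- The augmentation ideal of `k[G]`, as the `k`-span of the elements `g - 1`. -/
noncomputable def augSub : Submodule k (MonoidAlgebra k G) :=
  Submodule.span k (Set.range fun g : G => MonoidAlgebra.of k G g - 1)

/-- The powers of the augmentation ideal. The zeroth power is the whole algebra, unlike the zeroth
power in the semiring of `k`-submodules, which is `k ∙ 1`. -/
noncomputable def augPow : ℕ → Submodule k (MonoidAlgebra k G)
  | 0 => ⊤
  | m + 1 => augSub k G ^ (m + 1)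

variable {k G}

theorem of_sub_one_mem (g : G) : MonoidAlgebra.of k G g - 1 ∈ augSub k G :=
  Submodule.subset_span ⟨g, rfl⟩

theorem span_of_eq_top : Submodule.span k (Set.range (MonoidAlgebra.of k G)) = ⊤ := by
  rw [eq_top_iff]
  intro x _
  induction x using MonoidAlgebra.induction_on with
  | of g => exact Submodule.subset_span ⟨g, rfl⟩
  | add x y hx hy => exact add_mem (hx trivial) (hy trivial)
  | smul r x hx => exact Submodule.smul_mem _ _ (hx trivial)

theorem top_mul_augSub : ⊤ * augSub k G ≤ augSub k G := by
  rw [← span_of_eq_top, augSub, Submodule.span_mul_span, Submodule.span_le]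
  rintro _ ⟨_, ⟨g, rfl⟩, _, ⟨h, rfl⟩, rfl⟩
  have : MonoidAlgebra.of k G g * (MonoidAlgebra.of k G h - 1) =
      (MonoidAlgebra.of k G (g * h) - 1) - (MonoidAlgebra.of k G g - 1) := by
    rw [map_mul]; noncomm_ring
  change MonoidAlgebra.of k G g * (MonoidAlgebra.of k G h - 1) ∈ augSub k G
  rw [this]
  exact sub_mem (of_sub_one_mem _) (of_sub_one_mem _)

theorem augSub_mul_top : augSub k G * ⊤ ≤ augSub k G := by
  rw [← span_of_eq_top, augSub, Submodule.span_mul_span, Submodule.span_le]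
  rintro _ ⟨_, ⟨h, rfl⟩, _, ⟨g, rfl⟩, rfl⟩
  have : (MonoidAlgebra.of k G h - 1) * MonoidAlgebra.of k G g =
      (MonoidAlgebra.of k G (h * g) - 1) - (MonoidAlgebra.of k G g - 1) := by
    rw [map_mul]; noncomm_ring
  change (MonoidAlgebra.of k G h - 1) * MonoidAlgebra.of k G g ∈ augSub k G
  rw [this]
  exact sub_mem (of_sub_one_mem _) (of_sub_one_mem _)

theorem augPow_mul_le (m l : ℕ) : augPow k G m * augPow k G l ≤ augPow k G (m + l) := by
  rcases m with _ | m <;> rcases l with _ | l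
  · exact le_top
  · rw [zero_add]
    simp only [augPow]
    rw [pow_succ', ← mul_assoc]
    exact mul_le_mul' top_mul_augSub le_rfl
  · rw [add_zero]
    simp only [augPow]
    rw [pow_succ, mul_assoc]
    exact mul_le_mul' le_rfl augSub_mul_top
  · exact (pow_add _ _ _).ge

theorem augPow_mul_mem {m l : ℕ} {x y : MonoidAlgebra k G} (hx : x ∈ augPow k G m)
    (hy : y ∈ augPow k G l) : x * y ∈ augPow k G (m + l) :=
  augPow_mul_le m l (Submodule.mul_mem_mul hx hy)

theorem augPow_anti : Antitone (augPow k G) := by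
  refine antitone_nat_of_succ_le fun m => ?_
  intro x hx
  rcases m with _ | m
  · exact Submodule.mem_top
  · have h1 : augPow k G (m + 1 + 1) = augPow k G (m + 1) * augSub k G := pow_succ _ _
    rw [h1] at hx
    have h2 : augPow k G (m + 1) * augSub k G ≤ augPow k G (m + 1) * ⊤ :=
      mul_le_mul' le_rfl le_top
    exact augPow_mul_le (m + 1) 0 (h2 hx)

theorem augPow_one : augPow k G 1 = augSub k G := pow_one _

theorem augPow_pow_mem {m : ℕ} {x : MonoidAlgebra k G} (hx : x ∈ augPow k G m) (e : ℕ) :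
    x ^ e ∈ augPow k G (m * e) := by
  induction e with
  | zero => exact Submodule.mem_top
  | succ e ih => rw [pow_succ, mul_add, mul_one]; exact augPow_mul_mem ih hx

theorem of_mul_sub_one_mem {m : ℕ} {g h : G} (hg : MonoidAlgebra.of k G g - 1 ∈ augPow k G m)
    (hh : MonoidAlgebra.of k G h - 1 ∈ augPow k G m) :
    MonoidAlgebra.of k G (g * h) - 1 ∈ augPow k G m := by
  have : MonoidAlgebra.of k G (g * h) - 1 = (MonoidAlgebra.of k G g - 1) *
      (MonoidAlgebra.of k G h - 1) + (MonoidAlgebra.of k G g - 1)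
        + (MonoidAlgebra.of k G h - 1) := by
    rw [map_mul]; noncomm_ring
  rw [this]
  exact add_mem (add_mem (augPow_anti (Nat.le_add_right m m) (augPow_mul_mem hg hh)) hg) hh

theorem of_pow_char_pow_sub_one (p : ℕ) [Fact p.Prime] [CharP k p] (g : G) (e : ℕ) :
    MonoidAlgebra.of k G (g ^ p ^ e) - 1 = (MonoidAlgebra.of k G g - 1) ^ p ^ e := by
  have : CharP (MonoidAlgebra k G) p := charP_of_injective_algebraMap
    (FaithfulSMul.algebraMap_injective k (MonoidAlgebra k G)) p
  rw [sub_pow_char_pow_of_commute _ _ (Commute.one_right _), one_pow, map_pow]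

/-- A nonzero finite quotient of `𝔽_p[G]` by a left ideal has a nonzero vector fixed by the
`p`-group `G`. So a maximal left ideal killed by a power of the augmentation ideal is everything. -/
theorem augSub_zmod_nilpotent (p : ℕ) [Fact p.Prime] [Finite G] (hG : IsPGroup p G) :
    ∃ M : ℕ, augSub (ZMod p) G ^ M = ⊥ := by
  let A := MonoidAlgebra (ZMod p) G
  have : Finite A := Module.finite_of_finite (ZMod p)
  obtain ⟨S, ⟨m, hm⟩, hmax⟩ := exists_maximal_of_wellFoundedGT
    (fun S : Submodule A A => ∃ m : ℕ, ∀ y ∈ augPow (ZMod p) G m, ∀ x ∈ S, y * x = 0)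
    ⟨⊥, 0, by simp⟩
  have hS : S = ⊤ := by
    by_contra hne
    have : Nontrivial (A ⧸ S) := Submodule.Quotient.nontrivial_iff.2 hne
    have : Finite (A ⧸ S) := Finite.of_surjective _ (Submodule.mkQ_surjective S)
    let : MulAction G (A ⧸ S) := MulAction.compHom _ (MonoidAlgebra.of (ZMod p) G)
    have hsmul : ∀ (g : G) (v : A ⧸ S), g • v = MonoidAlgebra.of (ZMod p) G g • v :=
      fun g v => rfl
    have hdvd : p ∣ Nat.card (A ⧸ S) := by
      obtain ⟨v, hv⟩ := exists_ne (0 : A ⧸ S)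
      have hpv : p • v = 0 := by
        obtain ⟨x, rfl⟩ := Submodule.mkQ_surjective S v
        rw [← map_nsmul, ← Nat.cast_smul_eq_nsmul (ZMod p)]
        simp
      have hord := addOrderOf_eq_prime hpv hv
      exact hord.symm.dvd.trans <| addOrderOf_dvd_natCard v
    obtain ⟨v, hv, hv0⟩ := hG.exists_fixed_point_of_prime_dvd_card_of_fixed_point (A ⧸ S) hdvd
      (a := (0 : A ⧸ S)) (fun g => by rw [hsmul, smul_zero])
    obtain ⟨x, rfl⟩ := Submodule.mkQ_surjective S v
    have hxS : x ∉ S := fun h => hv0 ((Submodule.Quotient.mk_eq_zero S).2 h).symm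
    have hJx : ∀ y ∈ augSub (ZMod p) G, y * x ∈ S := by
      intro y hy
      induction hy using Submodule.span_induction with
      | mem y hy =>
        obtain ⟨g, rfl⟩ := hy
        have := hv g
        rw [hsmul, ← map_smul, Submodule.mkQ_apply, Submodule.mkQ_apply,
          Submodule.Quotient.eq] at this
        simpa [sub_mul] using this
      | zero => simp
      | add y z _ _ hy hz => rw [add_mul]; exact add_mem hy hz
      | smul r y _ hy => rw [smul_mul_assoc]; exact Submodule.smul_of_tower_mem S r hy
    have hle : S ⊔ Submodule.span A {x} ≤ S := by
      refine hmax ⟨m + 1, ?_⟩ le_sup_left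
      intro y hy z hz
      obtain ⟨s, hs, t, ht, rfl⟩ := Submodule.mem_sup.1 hz
      obtain ⟨a, rfl⟩ := Submodule.mem_span_singleton.1 ht
      have hy' : y ∈ augPow (ZMod p) G m * augSub (ZMod p) G := by
        rcases m with _ | m
        · have h1 : y ∈ augSub (ZMod p) G := by rw [← augPow_one]; exact hy
          have h2 := Submodule.mul_mem_mul (Submodule.mem_top (R := ZMod p) (x := (1 : A))) h1
          rwa [one_mul] at h2
        · have h1 : augPow (ZMod p) G (m + 1 + 1) = augPow (ZMod p) G (m + 1) * augSub (ZMod p) G :=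
            pow_succ _ _
          rwa [← h1]
      clear hy
      induction hy' using Submodule.mul_induction_on' with
      | mem_mul_mem y₁ h₁ y₂ h₂ =>
        rw [mul_assoc]
        refine hm y₁ h₁ _ ?_
        rw [mul_add, smul_eq_mul, ← mul_assoc]
        exact add_mem (S.smul_mem y₂ hs)
          (hJx _ (augSub_mul_top (Submodule.mul_mem_mul h₂ Submodule.mem_top)))
      | add y₁ _ y₂ _ h₁ h₂ => rw [add_mul, h₁, h₂, add_zero]
    exact hxS (hle (Submodule.mem_sup_right (Submodule.mem_span_singleton_self x)))
  refine ⟨m + 1, (Submodule.eq_bot_iff _).2 fun y hy => ?_⟩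
  have hy' : y ∈ augPow (ZMod p) G m := augPow_anti (Nat.le_succ m) hy
  simpa using hm y hy' 1 (hS ▸ Submodule.mem_top)

/-- The products of elements `g - 1` come from the group algebra over the prime field, so
nilpotency over `k` follows from nilpotency over `𝔽_p`. -/
theorem augPow_nilpotent (p : ℕ) [Fact p.Prime] [CharP k p] [Finite G] (hG : IsPGroup p G) :
    ∃ M : ℕ, augPow k G M = ⊥ := by
  obtain ⟨M, hM⟩ := augSub_zmod_nilpotent p hG
  have hM1 : augSub (ZMod p) G ^ (M + 1) = ⊥ := by
    rw [pow_succ, hM]; simp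
  refine ⟨M + 1, ?_⟩
  change augSub k G ^ (M + 1) = ⊥
  let φ : MonoidAlgebra (ZMod p) G →+* MonoidAlgebra k G :=
    MonoidAlgebra.mapRingHom G (ZMod.castHom dvd_rfl k)
  have hφ : ∀ g, φ (MonoidAlgebra.of (ZMod p) G g) = MonoidAlgebra.of k G g := by
    intro g
    simp [φ]
  have hs : (Set.range fun g : G => MonoidAlgebra.of k G g - 1) =
      φ '' (Set.range fun g : G => MonoidAlgebra.of (ZMod p) G g - 1) := by
    rw [← Set.range_comp]
    congr 1
    ext1 g
    rw [Function.comp_apply, map_sub, map_one, hφ]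
  rw [augSub, Submodule.span_pow, hs, ← Set.image_pow, Submodule.span_eq_bot]
  rintro _ ⟨x, hx, rfl⟩
  have : x ∈ augSub (ZMod p) G ^ (M + 1) := by
    rw [augSub, Submodule.span_pow]
    exact Submodule.subset_span hx
  rw [hM1, Submodule.mem_bot] at this
  rw [this, map_zero]

theorem map_augPow {H : Type*} [Group H] (ψ : G →* H) {m : ℕ} {x : MonoidAlgebra k G}
    (hx : x ∈ augPow k G m) : MonoidAlgebra.mapDomainRingHom k ψ x ∈ augPow k H m := by
  rcases m with _ | m
  · exact Submodule.mem_top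
  change x ∈ augSub k G ^ (m + 1) at hx
  change _ ∈ augSub k H ^ (m + 1)
  let φ : MonoidAlgebra k G →ₐ[k] MonoidAlgebra k H := MonoidAlgebra.mapDomainAlgHom k k ψ
  have h1 : φ x ∈ (augSub k G ^ (m + 1)).map φ.toLinearMap := ⟨x, hx, rfl⟩
  rw [Submodule.map_pow] at h1
  refine pow_le_pow_left' (?_ : Submodule.map φ.toLinearMap (augSub k G) ≤ augSub k H) _ h1
  rw [augSub, Submodule.map_span_le]
  rintro _ ⟨g, rfl⟩
  have : φ (MonoidAlgebra.of k G g - 1) = MonoidAlgebra.of k H (ψ g) - 1 := by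
    rw [map_sub, map_one]
    simp [φ]
  change φ (MonoidAlgebra.of k G g - 1) ∈ _
  rw [this]
  exact of_sub_one_mem _

theorem commFilt_augPow {ι : Type*} (g : ι → G)
    (hgen : ∀ x : G, MonoidAlgebra.of k G x - 1 ∈
      Submodule.span k (Set.range fun i => MonoidAlgebra.of k G (g i) - 1) ⊔ augPow k G 2)
    (hcomm : ∀ i j, MonoidAlgebra.of k G ((g j * g i)⁻¹ * (g i * g j)) - 1 ∈ augPow k G 3) :
    CommFilt (augPow k G) (fun i => MonoidAlgebra.of k G (g i) - 1) where
  zero_eq_top := rfl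
  anti := augPow_anti
  mul_mem := augPow_mul_mem
  top_le := by
    rw [← span_of_eq_top, Submodule.span_le]
    rintro _ ⟨x, rfl⟩
    have : MonoidAlgebra.of k G x = 1 + (MonoidAlgebra.of k G x - 1) := by abel
    rw [this]
    refine Submodule.add_mem_sup (Submodule.mem_span_singleton_self _) ?_
    rw [augPow_one]
    exact of_sub_one_mem x
  succ_le := by
    intro m
    rw [augPow_one]
    rcases m with _ | m
    · intro y hy
      rw [augPow_one] at hy
      have h2 := Submodule.mul_mem_mul
        (Submodule.mem_top (R := k) (x := (1 : MonoidAlgebra k G))) hy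
      rwa [one_mul] at h2
    · exact (pow_succ _ _).le
  one_le := by
    rw [augPow_one, augSub, Submodule.span_le]
    rintro _ ⟨x, rfl⟩
    exact hgen x
  mem_one i := by
    rw [augPow_one]
    exact of_sub_one_mem _
  comm i j := by
    have : (MonoidAlgebra.of k G (g i) - 1) * (MonoidAlgebra.of k G (g j) - 1) -
        (MonoidAlgebra.of k G (g j) - 1) * (MonoidAlgebra.of k G (g i) - 1) =
        MonoidAlgebra.of k G (g j * g i) *
          (MonoidAlgebra.of k G ((g j * g i)⁻¹ * (g i * g j)) - 1) := by
      rw [mul_sub (MonoidAlgebra.of k G (g j * g i)), ← map_mul (MonoidAlgebra.of k G) (g j * g i),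
        mul_inv_cancel_left, map_mul, map_mul]
      noncomm_ring
    rw [this]
    have h0 := augPow_mul_mem (m := 0) (Submodule.mem_top
      (x := MonoidAlgebra.of k G (g j * g i))) (hcomm i j)
    rwa [zero_add] at h0

/-- The kernel bound for a finite group of order `(p ^ e) ^ |ι|` with elements `g i` of order
dividing `p ^ e` whose `g i - 1` span the augmentation ideal modulo its square and commute modulo
its cube. -/
theorem finrank_ker_add_le (p : ℕ) [Fact p.Prime] [CharP k p] [Finite G] {ι : Type*} [Fintype ι]
    [LinearOrder ι] (e : ℕ) (hcard : Nat.card G = (p ^ e) ^ Fintype.card ι) (g : ι → G)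
    (hgen : ∀ x : G, MonoidAlgebra.of k G x - 1 ∈
      Submodule.span k (Set.range fun i => MonoidAlgebra.of k G (g i) - 1) ⊔ augPow k G 2)
    (hcomm : ∀ i j, MonoidAlgebra.of k G ((g j * g i)⁻¹ * (g i * g j)) - 1 ∈ augPow k G 3)
    (hpow : ∀ i, g i ^ p ^ e = 1) {t : ℕ} {x : MonoidAlgebra k G} (hx : x ∉ augPow k G t) :
    Module.finrank k (LinearMap.ker (LinearMap.mulLeft k x)) + (p ^ e - t) ^ Fintype.card ι ≤
      (p ^ e) ^ Fintype.card ι := by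
  classical
  have hG : IsPGroup p G := IsPGroup.of_card (n := e * Fintype.card ι) (by rw [hcard, pow_mul])
  obtain ⟨M, hM⟩ := augPow_nilpotent (k := k) p hG
  have hfin : Module.finrank k (MonoidAlgebra k G) = (p ^ e) ^ Fintype.card ι := by
    have := Fintype.ofFinite G
    rw [← hcard, Nat.card_eq_fintype_card,
      LinearEquiv.finrank_eq
        (MonoidAlgebra.coeffLinearEquiv k : MonoidAlgebra k G ≃ₗ[k] G →₀ k)]
    exact Module.finrank_finsupp_self k
  have hfilt := commFilt_augPow g hgen hcomm
  have hb : ∀ i, (MonoidAlgebra.of k G (g i) - 1) ^ p ^ e = 0 := by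
    intro i
    rw [← of_pow_char_pow_sub_one, hpow, map_one, sub_self]
  have hex : ∃ t, x ∉ augPow k G t := ⟨t, hx⟩
  have hspec := Nat.find_spec hex
  have hle : Nat.find hex ≤ t := Nat.find_min' hex hx
  obtain ⟨s, hs⟩ : ∃ s, Nat.find hex = s + 1 := by
    refine Nat.exists_eq_succ_of_ne_zero fun h0 => ?_
    rw [h0] at hspec
    exact hspec Submodule.mem_top
  rw [hs] at hspec
  have hxs : x ∈ augPow k G s := not_not.1 (Nat.find_min hex (by omega))
  have := hfilt.le_finrank_range hb hM hfin hxs hspec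
  have hrn := LinearMap.finrank_range_add_finrank_ker (LinearMap.mulLeft k x)
  rw [hfin] at hrn
  have hmono : (p ^ e - t) ^ Fintype.card ι ≤ (p ^ e - s) ^ Fintype.card ι :=
    Nat.pow_le_pow_left (by omega) _
  omega

end Aug

/-! ### Congruence subgroups -/

section Congruence

variable {p : ℕ} [hp : Fact p.Prime] {d : ℕ}

theorem mem_CS_iff {i : ℕ} {x : (Matrix (Fin d) (Fin d) ℤ_[p])ˣ} :
    x ∈ CS p i d ↔ ∃ X : Matrix (Fin d) (Fin d) ℤ_[p], x.1 = 1 + (p : ℤ_[p]) ^ i • X := by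
  have h1 : x ∈ CS p i d ↔ ∀ a b, (p : ℤ_[p]) ^ i ∣ (x.1 - 1) a b := by
    rw [CS, MonoidHom.mem_ker, Units.ext_iff]
    change (RingHom.mapMatrix (Ideal.Quotient.mk (Ideal.span {(p : ℤ_[p]) ^ i}))) x.1 = 1 ↔ _
    rw [← map_one (RingHom.mapMatrix (Ideal.Quotient.mk (Ideal.span {(p : ℤ_[p]) ^ i}))),
      ← Matrix.ext_iff]
    refine forall₂_congr fun a b => ?_
    rw [RingHom.mapMatrix_apply, RingHom.mapMatrix_apply, Matrix.map_apply, Matrix.map_apply,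
      Ideal.Quotient.mk_eq_mk_iff_sub_mem, Ideal.mem_span_singleton, Matrix.sub_apply]
  rw [h1]
  constructor
  · intro h
    choose X hX using h
    refine ⟨Matrix.of X, ?_⟩
    rw [← sub_eq_iff_eq_add']
    ext a b
    rw [hX]
    simp
  · rintro ⟨X, hX⟩ a b
    rw [hX]
    simp

theorem inv_mul_mem_CS_iff {i : ℕ} {x y : (Matrix (Fin d) (Fin d) ℤ_[p])ˣ} :
    x⁻¹ * y ∈ CS p i d ↔ ∃ Z : Matrix (Fin d) (Fin d) ℤ_[p], y.1 = x.1 + (p : ℤ_[p]) ^ i • Z := by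
  rw [mem_CS_iff]
  constructor
  · rintro ⟨Z, hZ⟩
    refine ⟨x.1 * Z, ?_⟩
    have : y.1 = x.1 * (x⁻¹ * y).1 := by simp
    rw [this, hZ, mul_add, mul_one, mul_smul_comm]
  · rintro ⟨Z, hZ⟩
    refine ⟨(x⁻¹).1 * Z, ?_⟩
    rw [Units.val_mul, hZ, mul_add, mul_smul_comm, Units.inv_mul]

theorem CS_mono {i j : ℕ} (hij : i ≤ j) : CS p j d ≤ CS p i d := by
  intro x hx
  obtain ⟨X, hX⟩ := mem_CS_iff.1 hx
  refine mem_CS_iff.2 ⟨(p : ℤ_[p]) ^ (j - i) • X, ?_⟩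
  rw [hX, smul_smul, ← pow_add, Nat.add_sub_cancel' hij]

theorem exists_unit {i : ℕ} (hi : 0 < i) (X : Matrix (Fin d) (Fin d) ℤ_[p]) :
    ∃ x : (Matrix (Fin d) (Fin d) ℤ_[p])ˣ, x.1 = 1 + (p : ℤ_[p]) ^ i • X := by
  suffices IsUnit (1 + (p : ℤ_[p]) ^ i • X) from ⟨this.unit, this.unit_spec⟩
  rw [Matrix.isUnit_iff_isUnit_det]
  refine isUnit_of_map_unit (IsLocalRing.residue ℤ_[p]) _ ?_
  rw [RingHom.map_det]
  have : (IsLocalRing.residue ℤ_[p]).mapMatrix (1 + (p : ℤ_[p]) ^ i • X) = 1 := by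
    rw [map_add, map_one]
    have : (IsLocalRing.residue ℤ_[p]).mapMatrix ((p : ℤ_[p]) ^ i • X) = 0 := by
      ext a b
      have h0 : IsLocalRing.residue ℤ_[p] (p : ℤ_[p]) = 0 := by
        rw [IsLocalRing.residue_eq_zero_iff, PadicInt.maximalIdeal_eq_span_p]
        exact Ideal.mem_span_singleton_self _
      simp only [RingHom.mapMatrix_apply, Matrix.map_apply, Matrix.smul_apply, smul_eq_mul,
        map_mul, map_pow, h0, zero_pow hi.ne', zero_mul, Matrix.zero_apply]
    rw [this, add_zero]
  rw [this]
  simp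

theorem dvd_one_add_pow {S : Type*} [CommRing S] {i : ℕ} (hi : 0 < i) (h2 : p = 2 → 2 ≤ i)
    (T : S) : (p : S) ^ (i + 2) ∣ (1 + (p : S) ^ i * T) ^ p - (1 + (p : S) ^ (i + 1) * T) := by
  obtain ⟨r, hr⟩ : ∃ r, p = r + 2 := ⟨p - 2, by have := hp.out.two_le; omega⟩
  rw [add_comm 1, add_pow]
  have : ∀ m ∈ Finset.range r.succ, (p : S) ^ (i + 2) ∣
      ((p : S) ^ i * T) ^ (m + 2) * 1 ^ (p - (m + 2)) * (p.choose (m + 2) : S) := by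
    intro m hm
    have hm' : m ≤ r := by simpa [Nat.lt_succ_iff] using hm
    have hle : 2 * i ≤ i * (m + 2) := by nlinarith
    rw [one_pow, mul_one, mul_pow, ← pow_mul]
    rcases hm'.lt_or_eq with hlt | rfl
    · have hdvd : (p : S) ∣ (p.choose (m + 2) : S) :=
        Nat.cast_dvd_cast (hp.out.dvd_choose_self (by omega) (by omega))
      calc (p : S) ^ (i + 2) ∣ (p : S) ^ (i * (m + 2)) * p := by
            rw [← pow_succ]; exact pow_dvd_pow _ (by omega)
        _ ∣ _ := mul_dvd_mul (Dvd.intro _ rfl) hdvd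
    · refine Dvd.dvd.mul_right (Dvd.dvd.mul_right (pow_dvd_pow _ ?_) _) _
      rcases Nat.eq_zero_or_pos m with rfl | hmpos
      · have := h2 (by omega)
        omega
      · nlinarith
  have hsum := Finset.dvd_sum this
  have hsplit : ∑ m ∈ Finset.range (p + 1), ((p : S) ^ i * T) ^ m * 1 ^ (p - m) * (p.choose m : S)
      = ∑ m ∈ Finset.range r.succ,
        ((p : S) ^ i * T) ^ (m + 2) * 1 ^ (p - (m + 2)) * (p.choose (m + 2) : S) +
        (1 + (p : S) ^ (i + 1) * T) := by
    have : p + 1 = r + 1 + 1 + 1 := by omega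
    rw [this, Finset.sum_range_succ', Finset.sum_range_succ']
    simp
    ring
  rw [hsplit, add_sub_cancel_right]
  exact hsum

theorem one_add_smul_pow {i : ℕ} (hi : 0 < i) (h2 : p = 2 → 2 ≤ i)
    (X : Matrix (Fin d) (Fin d) ℤ_[p]) : ∃ Z : Matrix (Fin d) (Fin d) ℤ_[p],
      (1 + (p : ℤ_[p]) ^ i • X) ^ p = 1 + (p : ℤ_[p]) ^ (i + 1) • X + (p : ℤ_[p]) ^ (i + 2) • Z := by
  obtain ⟨f, hf⟩ := dvd_one_add_pow hi h2 (Polynomial.X : Polynomial ℤ_[p])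
  refine ⟨Polynomial.aeval X f, ?_⟩
  have := congrArg (Polynomial.aeval X) hf
  simp only [map_sub, map_add, map_mul, map_pow, map_one, Polynomial.aeval_X, map_natCast] at this
  rw [sub_eq_iff_eq_add'] at this
  have hcast : ∀ (j : ℕ) (Y : Matrix (Fin d) (Fin d) ℤ_[p]),
      (p : ℤ_[p]) ^ j • Y = (p : Matrix (Fin d) (Fin d) ℤ_[p]) ^ j * Y := by
    intro j Y
    rw [Algebra.smul_def, map_pow, map_natCast]
  rw [hcast, hcast, hcast, this]

theorem pow_mem_CS {i : ℕ} (hi : 0 < i) (h2 : p = 2 → 2 ≤ i)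
    {x : (Matrix (Fin d) (Fin d) ℤ_[p])ˣ} (hx : x ∈ CS p i d) (e : ℕ) :
    x ^ p ^ e ∈ CS p (i + e) d := by
  induction e with
  | zero => simpa using hx
  | succ e ih =>
    obtain ⟨X, hX⟩ := mem_CS_iff.1 ih
    obtain ⟨Z, hZ⟩ := one_add_smul_pow (i := i + e) (by omega) (fun h => by have := h2 h; omega) X
    refine mem_CS_iff.2 ⟨X + (p : ℤ_[p]) • Z, ?_⟩
    rw [pow_succ p, pow_mul, Units.val_pow_eq_pow_val, hX, hZ, smul_add, smul_smul, ← pow_succ,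
      add_assoc]
    rfl

/-- The `p`-th power map takes `1 + p ^ i X` to `1 + p ^ (i + 1) X` modulo `p ^ (i + 2)`, so it
maps onto `CS (i + 1) / CS (i + 2)`. -/
theorem exists_pow_mul {i : ℕ} (hi : 0 < i) (h2 : p = 2 → 2 ≤ i)
    {x : (Matrix (Fin d) (Fin d) ℤ_[p])ˣ} (hx : x ∈ CS p (i + 1) d) :
    ∃ y ∈ CS p i d, ∃ r ∈ CS p (i + 2) d, x = y ^ p * r := by
  obtain ⟨X, hX⟩ := mem_CS_iff.1 hx
  obtain ⟨y, hy⟩ := exists_unit hi X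
  obtain ⟨Z, hZ⟩ := one_add_smul_pow hi h2 X
  refine ⟨y, mem_CS_iff.2 ⟨X, hy⟩, (y ^ p)⁻¹ * x, ?_, by simp⟩
  refine inv_mul_mem_CS_iff.2 ⟨-Z, ?_⟩
  rw [Units.val_pow_eq_pow_val, hy, hZ, hX, smul_neg]
  abel

theorem comm_mem_CS {u : ℕ} {x y : (Matrix (Fin d) (Fin d) ℤ_[p])ˣ} (hx : x ∈ CS p u d)
    (hy : y ∈ CS p u d) : (y * x)⁻¹ * (x * y) ∈ CS p (u + u) d := by
  obtain ⟨X, hX⟩ := mem_CS_iff.1 hx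
  obtain ⟨Y, hY⟩ := mem_CS_iff.1 hy
  refine inv_mul_mem_CS_iff.2 ⟨X * Y - Y * X, ?_⟩
  rw [Units.val_mul, Units.val_mul, hX, hY, pow_add]
  simp only [mul_add, add_mul, one_mul, mul_one, smul_sub, smul_mul_smul_comm]
  abel

theorem mem_csSub_iff {u n : ℕ} {x : CS p u d} : x ∈ csSub p u d n ↔ x.1 ∈ CS p (u + n - 1) d :=
  Iff.rfl

theorem smul_pow_cancel {i : ℕ} {X Y : Matrix (Fin d) (Fin d) ℤ_[p]}
    (h : (p : ℤ_[p]) ^ i • X = (p : ℤ_[p]) ^ i • Y) : X = Y := by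
  have h0 : (p : ℤ_[p]) ^ i ≠ 0 := pow_ne_zero _ (by exact_mod_cast hp.out.ne_zero)
  ext a b
  have := congrFun (congrFun h a) b
  simpa [h0, hp.out.ne_zero] using this

/-- The map `1 + p ^ u X ↦ X` identifies `Γ/Γ_(e+1)` with the matrices over `ℤ/p^e`, as a set. -/
theorem card_quotient {u : ℕ} (hu : 0 < u) (e : ℕ) :
    Nat.card (CS p u d ⧸ csSub p u d (e + 1)) = (p ^ e) ^ (d * d) := by
  have hex : ∀ x : CS p u d, ∃ X : Matrix (Fin d) (Fin d) ℤ_[p],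
      x.1.1 = 1 + (p : ℤ_[p]) ^ u • X := fun x => mem_CS_iff.1 x.2
  choose X hX using hex
  let φ : CS p u d → Matrix (Fin d) (Fin d) (ZMod (p ^ e)) :=
    fun x => (PadicInt.toZModPow e).mapMatrix (X x)
  have hφ : ∀ x y, x⁻¹ * y ∈ csSub p u d (e + 1) ↔ φ x = φ y := by
    intro x y
    rw [mem_csSub_iff]
    change x.1⁻¹ * y.1 ∈ CS p (u + e) d ↔ _
    rw [inv_mul_mem_CS_iff, hX, hX]
    have h1 : φ x = φ y ↔ ∀ a b, (p : ℤ_[p]) ^ e ∣ X y a b - X x a b := by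
      rw [eq_comm, ← Matrix.ext_iff]
      refine forall₂_congr fun a b => ?_
      simp only [φ, RingHom.mapMatrix_apply, Matrix.map_apply]
      rw [← sub_eq_zero, ← map_sub, ← RingHom.mem_ker, PadicInt.ker_toZModPow,
        Ideal.mem_span_singleton]
    rw [h1]
    constructor
    · rintro ⟨Z, hZ⟩ a b
      rw [add_assoc, add_right_inj, pow_add, ← smul_smul, ← smul_add] at hZ
      rw [smul_pow_cancel hZ]
      simp
    · intro h
      choose Z hZ using h
      refine ⟨Matrix.of Z, ?_⟩
      have : X y = X x + (p : ℤ_[p]) ^ e • Matrix.of Z := by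
        ext a b
        have := hZ a b
        rw [sub_eq_iff_eq_add'] at this
        simp [this]
      rw [this, smul_add, smul_smul, ← pow_add, add_assoc]
  have hsurj : Function.Surjective φ := by
    intro W
    obtain ⟨V, rfl⟩ : ∃ V : Matrix (Fin d) (Fin d) ℤ_[p], (PadicInt.toZModPow e).mapMatrix V = W := by
      choose V hV using fun a b => ZMod.ringHom_surjective (PadicInt.toZModPow (p := p) e) (W a b)
      exact ⟨Matrix.of V, by ext a b; simp [hV]⟩
    obtain ⟨x, hx⟩ := exists_unit hu V
    refine ⟨⟨x, mem_CS_iff.2 ⟨V, hx⟩⟩, ?_⟩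
    have := (hX ⟨x, mem_CS_iff.2 ⟨V, hx⟩⟩).symm.trans hx
    rw [add_right_inj] at this
    simp only [φ]
    rw [smul_pow_cancel this]
  have hpe : NeZero (p ^ e) := ⟨pow_ne_zero _ hp.out.ne_zero⟩
  have e1 : (CS p u d ⧸ csSub p u d (e + 1)) ≃ Quotient (Setoid.ker φ) :=
    Quotient.congrRight fun x y => by
      rw [QuotientGroup.leftRel_apply, hφ]
      rfl
  rw [Nat.card_congr (e1.trans (Setoid.quotientKerEquivOfSurjective φ hsurj))]
  rw [Matrix, Nat.card_fun, Nat.card_fun]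
  simp [pow_mul]

/-! ### The quotients `Γ/Γ_n` -/

theorem exists_gens {u : ℕ} (hu : 0 < u) (ι : Type*) (E : ι → Matrix (Fin d) (Fin d) ℤ_[p]) :
    ∃ g : ι → CS p u d, ∀ i, (g i).1.1 = 1 + (p : ℤ_[p]) ^ u • E i := by
  choose g hg using fun i => exists_unit hu (E i)
  exact ⟨fun i => ⟨g i, mem_CS_iff.2 ⟨E i, hg i⟩⟩, hg⟩

section Quotient

variable {u : ℕ} (k : Type*) [Field k] [CharP k p] (e : ℕ)

/-- Deep congruence subgroups lie deep in the augmentation filtration: if `x ∈ CS(u + j)` then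
`x - 1` lies in the `p ^ j`-th power of the augmentation ideal of `k[Γ/Γ_(e+1)]`. -/
theorem of_sub_one_mem_augPow (hu : 0 < u) (h2 : p = 2 → 2 ≤ u) (j : ℕ) :
    ∀ i, u + j ≤ i → ∀ x : CS p u d, x.1 ∈ CS p i d →
    MonoidAlgebra.of k (CS p u d ⧸ csSub p u d (e + 1)) (QuotientGroup.mk x) - 1 ∈
      augPow k (CS p u d ⧸ csSub p u d (e + 1)) (p ^ j) := by
  induction j with
  | zero =>
    intro i _ x _
    rw [pow_zero, augPow_one]
    exact of_sub_one_mem _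
  | succ j ih =>
    -- descending induction on the level `i`, starting at `i ≥ u + e` where `x` is trivial in `Γ/Γ_(e+1)`
    suffices H : ∀ r i, u + e ≤ i + r → u + (j + 1) ≤ i → ∀ x : CS p u d, x.1 ∈ CS p i d →
        MonoidAlgebra.of k (CS p u d ⧸ csSub p u d (e + 1)) (QuotientGroup.mk x) - 1 ∈
          augPow k (CS p u d ⧸ csSub p u d (e + 1)) (p ^ (j + 1)) from
      fun i hi => H (u + e) i (by omega) hi
    intro r
    induction r with
    | zero =>
      intro i hi _ x hx
      have h1 : (QuotientGroup.mk x : CS p u d ⧸ csSub p u d (e + 1)) = 1 := by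
        rw [QuotientGroup.eq_one_iff, mem_csSub_iff]
        exact CS_mono (by omega) hx
      rw [h1, map_one, sub_self]
      exact zero_mem _
    | succ r ihr =>
      intro i hi hij x hx
      obtain ⟨i, rfl⟩ : ∃ i', i = i' + 1 := ⟨i - 1, by omega⟩
      obtain ⟨y, hy, z, hz, hxyz⟩ := exists_pow_mul (i := i) (by omega)
        (fun h => by have := h2 h; omega) hx
      have hy' : y ∈ CS p u d := CS_mono (by omega) hy
      have hz' : z ∈ CS p u d := CS_mono (by omega) hz
      have hx' : x = (⟨y, hy'⟩ : CS p u d) ^ p * ⟨z, hz'⟩ := Subtype.ext hxyz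
      rw [hx', QuotientGroup.mk_mul]
      refine of_mul_sub_one_mem ?_ (ihr (i + 2) (by omega) (by omega) ⟨z, hz'⟩ hz)
      have h1 := augPow_pow_mem (ih i (by omega) ⟨y, hy'⟩ hy) p
      have h3 := of_pow_char_pow_sub_one (k := k) p
        (QuotientGroup.mk ⟨y, hy'⟩ : CS p u d ⧸ csSub p u d (e + 1)) 1
      rw [pow_one] at h3
      rw [QuotientGroup.mk_pow, h3, pow_succ]
      exact h1

/-- The elements `g - 1`, for `g = 1 + p ^ u E_{ab}`, span the augmentation ideal of
`k[Γ/Γ_(e+1)]` modulo its square. -/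
theorem of_sub_one_mem_span (hu : 0 < u) (h2 : p = 2 → 2 ≤ u)
    (g : Fin d ×ₗ Fin d → CS p u d)
    (hg : ∀ i, (g i).1.1 = 1 + (p : ℤ_[p]) ^ u •
      Matrix.single (ofLex i).1 (ofLex i).2 (1 : ℤ_[p])) (x : CS p u d) :
    MonoidAlgebra.of k (CS p u d ⧸ csSub p u d (e + 1)) (QuotientGroup.mk x) - 1 ∈
      Submodule.span k (Set.range fun i =>
        MonoidAlgebra.of k (CS p u d ⧸ csSub p u d (e + 1)) (QuotientGroup.mk (g i)) - 1) ⊔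
      augPow k (CS p u d ⧸ csSub p u d (e + 1)) 2 := by
  set T := Submodule.span k (Set.range fun i =>
        MonoidAlgebra.of k (CS p u d ⧸ csSub p u d (e + 1)) (QuotientGroup.mk (g i)) - 1) ⊔
      augPow k (CS p u d ⧸ csSub p u d (e + 1)) 2 with hT
  have hT2 : augPow k (CS p u d ⧸ csSub p u d (e + 1)) 2 ≤ T := le_sup_right
  have hmul : ∀ x y : CS p u d,
      MonoidAlgebra.of k (CS p u d ⧸ csSub p u d (e + 1)) (QuotientGroup.mk x) - 1 ∈ T →
      MonoidAlgebra.of k (CS p u d ⧸ csSub p u d (e + 1)) (QuotientGroup.mk y) - 1 ∈ T →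
      MonoidAlgebra.of k (CS p u d ⧸ csSub p u d (e + 1)) (QuotientGroup.mk (x * y)) - 1 ∈ T := by
    intro x y hx hy
    rw [QuotientGroup.mk_mul, map_mul]
    set X := MonoidAlgebra.of k (CS p u d ⧸ csSub p u d (e + 1)) (QuotientGroup.mk x) with hX
    set Y := MonoidAlgebra.of k (CS p u d ⧸ csSub p u d (e + 1)) (QuotientGroup.mk y) with hY
    have : X * Y - 1 = (X - 1) * (Y - 1) + (X - 1) + (Y - 1) := by noncomm_ring
    rw [this]
    refine add_mem (add_mem (hT2 ?_) hx) hy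
    refine augPow_mul_mem (m := 1) (l := 1) ?_ ?_ <;> rw [augPow_one] <;> exact of_sub_one_mem _
  have hdeep : ∀ x : CS p u d, x.1 ∈ CS p (u + 1) d →
      MonoidAlgebra.of k (CS p u d ⧸ csSub p u d (e + 1)) (QuotientGroup.mk x) - 1 ∈ T := by
    intro x hx
    refine hT2 (augPow_anti ?_ (of_sub_one_mem_augPow k e hu h2 1 (u + 1) le_rfl x hx))
    rw [pow_one]
    exact hp.out.two_le
  -- `Q X`: the claim holds for every element of `Γ` congruent to `1 + p ^ u X` mod `p ^ (u + 1)`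
  let Q : Matrix (Fin d) (Fin d) ℤ_[p] → Prop := fun X => ∀ (Z : Matrix (Fin d) (Fin d) ℤ_[p])
    (x : CS p u d), x.1.1 = 1 + (p : ℤ_[p]) ^ u • X + (p : ℤ_[p]) ^ (u + 1) • Z →
      MonoidAlgebra.of k (CS p u d ⧸ csSub p u d (e + 1)) (QuotientGroup.mk x) - 1 ∈ T
  have hQ0 : ∀ Y, Q ((p : ℤ_[p]) • Y) := by
    intro Y Z x hx
    refine hdeep x (mem_CS_iff.2 ⟨Y + Z, ?_⟩)
    rw [hx, smul_smul, ← pow_succ, smul_add, add_assoc]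
  have hQadd : ∀ X Y, Q X → Q Y → Q (X + Y) := by
    intro X Y hQX hQY Z x hx
    obtain ⟨y, hy⟩ := exists_unit hu X
    have hyCS : y ∈ CS p u d := mem_CS_iff.2 ⟨X, hy⟩
    let r : CS p u d := ⟨y, hyCS⟩⁻¹ * x
    have hxr : x = ⟨y, hyCS⟩ * r := by simp [r]
    obtain ⟨W, hW⟩ := mem_CS_iff.1 r.2
    have hxv : x.1.1 = y.1 * r.1.1 := by
      conv_lhs => rw [hxr]
      rfl
    rw [hxr]
    refine hmul _ _ (hQX 0 _ (by simp [hy])) (hQY (Z - (p : ℤ_[p]) ^ (u - 1) • (X * W)) r ?_)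
    rw [hW, smul_sub, smul_smul, ← pow_add, show u + 1 + (u - 1) = u + u by omega]
    rw [hx, hW, hy] at hxv
    have h3 : (1 + (p : ℤ_[p]) ^ u • X) * (1 + (p : ℤ_[p]) ^ u • W) =
        1 + (p : ℤ_[p]) ^ u • X + (p : ℤ_[p]) ^ u • W + (p : ℤ_[p]) ^ (u + u) • (X * W) := by
      simp only [mul_add, add_mul, one_mul, mul_one, smul_mul_smul_comm, pow_add]
      abel
    rw [h3, smul_add] at hxv
    have h4 : (p : ℤ_[p]) ^ u • W = (1 + (p : ℤ_[p]) ^ u • X + (p : ℤ_[p]) ^ u • W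
        + (p : ℤ_[p]) ^ (u + u) • (X * W)) - 1 - (p : ℤ_[p]) ^ u • X
        - (p : ℤ_[p]) ^ (u + u) • (X * W) := by abel
    rw [h4, ← hxv]
    abel
  have hQE : ∀ i j, Q (Matrix.single i j (1 : ℤ_[p])) := by
    intro i j Z x hx
    have hgx : (g (toLex (i, j)))⁻¹ * x ∈ (CS p (u + 1) d).comap (CS p u d).subtype := by
      change (g (toLex (i, j))).1⁻¹ * x.1 ∈ CS p (u + 1) d
      refine inv_mul_mem_CS_iff.2 ⟨Z, ?_⟩
      rw [hx, hg]
      rfl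
    rw [← mul_inv_cancel_left (g (toLex (i, j))) x]
    refine hmul _ _ ?_ (hdeep _ hgx)
    exact (le_sup_left : _ ≤ T) (Submodule.subset_span ⟨toLex (i, j), rfl⟩)
  have hQnat : ∀ i j (m : ℕ), Q (Matrix.single i j (m : ℤ_[p])) := by
    intro i j m
    induction m with
    | zero => simpa using hQ0 0
    | succ m ih =>
      rw [Nat.cast_succ, Matrix.single_add]
      exact hQadd _ _ ih (hQE i j)
  have hQ : ∀ X, Q X := by
    intro X
    induction X using Matrix.induction_on' with
    | h_zero => simpa using hQ0 0
    | h_add X Y hX hY => exact hQadd _ _ hX hY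
    | h_std_basis i j c =>
      obtain ⟨m, -, hm⟩ := PadicInt.exists_mem_range c
      rw [PadicInt.maximalIdeal_eq_span_p, Ideal.mem_span_singleton] at hm
      obtain ⟨c', hc'⟩ := hm
      rw [sub_eq_iff_eq_add'] at hc'
      rw [hc', Matrix.single_add]
      refine hQadd _ _ (hQnat i j m) ?_
      rw [← smul_eq_mul, ← Matrix.smul_single]
      exact hQ0 _
  obtain ⟨X, hX⟩ := mem_CS_iff.1 x.2
  exact hQ X 0 x (by simpa using hX)

theorem finrank_ker_le (hu : 0 < u) (h2 : p = 2 → 2 ≤ u) {t : ℕ}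
    {x : MonoidAlgebra k (CS p u d ⧸ csSub p u d (e + 1))}
    (hx : x ∉ augPow k (CS p u d ⧸ csSub p u d (e + 1)) t) :
    Module.finrank k (LinearMap.ker (LinearMap.mulLeft k x)) + (p ^ e - t) ^ (d * d) ≤
      (p ^ e) ^ (d * d) := by
  have hcard := card_quotient (p := p) (d := d) hu e
  have hfin : Finite (CS p u d ⧸ csSub p u d (e + 1)) := Nat.finite_of_card_ne_zero (by
    rw [hcard]
    exact pow_ne_zero _ (pow_ne_zero _ hp.out.ne_zero))
  obtain ⟨g, hg⟩ := exists_gens (d := d) hu (Fin d ×ₗ Fin d)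
    (fun i => Matrix.single (ofLex i).1 (ofLex i).2 (1 : ℤ_[p]))
  have hι : Fintype.card (Fin d ×ₗ Fin d) = d * d := by
    rw [Fintype.card_congr ofLex]; simp
  rw [← hι] at hcard ⊢
  refine finrank_ker_add_le p e hcard (fun i => QuotientGroup.mk (g i)) ?_ ?_ ?_ hx
  · intro y
    obtain ⟨y, rfl⟩ := QuotientGroup.mk_surjective y
    exact of_sub_one_mem_span k e hu h2 g hg y
  · intro i j
    have hc : ((g j * g i)⁻¹ * (g i * g j)).1 ∈ CS p (u + u) d := comm_mem_CS (g i).2 (g j).2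
    rcases hp.out.eq_two_or_odd' with hp2 | hodd
    · refine augPow_anti ?_ (of_sub_one_mem_augPow k e hu h2 2 (u + u) ?_ _ hc)
      · rw [hp2]; norm_num
      · have := h2 hp2
        omega
    · refine augPow_anti ?_ (of_sub_one_mem_augPow k e hu h2 1 (u + u) (by omega) _ hc)
      rw [pow_one]
      have := hp.out.two_le
      rcases hodd with ⟨m, hm⟩
      omega
  · intro i
    rw [← QuotientGroup.mk_pow, QuotientGroup.eq_one_iff, mem_csSub_iff]
    exact pow_mem_CS hu h2 (g i).2 e

end Quotient

theorem exists_notMem_csSub {u : ℕ} {x : CS p u d} (hx : x ≠ 1) :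
    ∃ e₀, ∀ e, e₀ ≤ e → x ∉ csSub p u d (e + 1) := by
  by_contra! h
  refine hx (Subtype.ext (Units.ext ?_))
  have key : ∀ e, x.1 ∈ CS p e d := fun e => by
    obtain ⟨e', he, hxe⟩ := h e
    exact CS_mono (by omega) (mem_csSub_iff.1 hxe)
  ext a b
  rw [← PadicInt.ext_of_toZModPow]
  intro e
  obtain ⟨X, hX⟩ := mem_CS_iff.1 (key e)
  rw [← sub_eq_zero, ← map_sub, ← RingHom.mem_ker, PadicInt.ker_toZModPow,
    Ideal.mem_span_singleton, hX]
  simp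

/-- Far enough in the tower, a point `g` of the support of `a` is separated from the other points
of the support, so the coefficient of `a` at `g` survives. -/
theorem exists_csQuotHom_ne_zero {u : ℕ} {k : Type*} [Field k]
    {a : MonoidAlgebra k (CS p u d)} (ha : a ≠ 0) : ∃ e, csQuotHom k p u d (e + 1) a ≠ 0 := by
  classical
  obtain ⟨g, hg⟩ : ∃ g, a.coeff g ≠ 0 := by
    by_contra! h
    exact ha (MonoidAlgebra.ext (Finsupp.ext h))
  have hex : ∀ h : CS p u d, ∃ e₀, h ≠ g → ∀ e, e₀ ≤ e → g⁻¹ * h ∉ csSub p u d (e + 1) := by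
    intro h
    by_cases hh : h = g
    · exact ⟨0, fun h0 => absurd hh h0⟩
    · obtain ⟨e₀, he₀⟩ := exists_notMem_csSub (x := g⁻¹ * h)
        (fun h1 => hh (inv_mul_eq_one.1 h1).symm)
      exact ⟨e₀, fun _ => he₀⟩
  choose N hN using hex
  let e := a.coeff.support.sup N
  refine ⟨e, fun h0 => hg ?_⟩
  have h1 : (csQuotHom k p u d (e + 1) a).coeff (QuotientGroup.mk g) = a.coeff g := by
    change Finsupp.mapDomain QuotientGroup.mk a.coeff (QuotientGroup.mk g) = a.coeff g
    rw [Finsupp.mapDomain, Finsupp.sum_apply, Finsupp.sum, Finset.sum_eq_single g]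
    · simp
    · intro h hh hne
      refine Finsupp.single_eq_of_ne fun heq => ?_
      exact hN h hne e (Finset.le_sup hh) (QuotientGroup.eq.1 heq)
    · intro hng
      rw [Finsupp.notMem_support_iff.1 hng]
      simp
  rw [← h1, h0]
  rfl

theorem exists_notMem_augPow {u : ℕ} (hu : 0 < u) {k : Type*} [Field k] [CharP k p]
    {a : MonoidAlgebra k (CS p u d)} (ha : a ≠ 0) : ∃ t e₀, ∀ e, e₀ ≤ e →
      csQuotHom k p u d (e + 1) a ∉ augPow k (CS p u d ⧸ csSub p u d (e + 1)) t := by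
  obtain ⟨e₀, he₀⟩ := exists_csQuotHom_ne_zero ha
  have hcard := card_quotient (p := p) (d := d) hu e₀
  have hfin : Finite (CS p u d ⧸ csSub p u d (e₀ + 1)) := Nat.finite_of_card_ne_zero (by
    rw [hcard]
    exact pow_ne_zero _ (pow_ne_zero _ hp.out.ne_zero))
  obtain ⟨t, ht⟩ := augPow_nilpotent (k := k) p
    (IsPGroup.of_card (n := e₀ * (d * d)) (hcard.trans (pow_mul _ _ _).symm))
  refine ⟨t, e₀, fun e he hmem => he₀ ?_⟩
  have hle : csSub p u d (e + 1) ≤ (csSub p u d (e₀ + 1)).comap (MonoidHom.id _) := by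
    intro x hx
    exact CS_mono (by omega) (mem_csSub_iff.1 hx)
  have h1 := map_augPow (QuotientGroup.map _ _ (MonoidHom.id _) hle) hmem
  rw [ht, Submodule.mem_bot] at h1
  rw [← h1]
  have hcomp : (MonoidAlgebra.mapDomainRingHom k (QuotientGroup.map _ _ (MonoidHom.id _) hle)).comp
      (csQuotHom k p u d (e + 1)) = csQuotHom k p u d (e₀ + 1) := by
    rw [csQuotHom, csQuotHom]
    ext <;> simp
  exact (RingHom.congr_fun hcomp a).symm

end Congruence

/-- With `Γ = CS(u,d,p)`, `Γ_n = CS(u+n-1,d,p)`, `k` a field of characteristic `p`, and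
`a ∈ k[Γ]` nonzero, the normalized dimension of the kernel of left multiplication by the
image of `a` on `k[Γ/Γ_n]` tends to `0`:
`(dim_k ker α_n)/[Γ : Γ_n] → 0` as `n → ∞`. -/
theorem tendsto_finrank_ker_mulLeft_div_index
    (p : ℕ) [Fact p.Prime] (u d : ℕ) (hu : 0 < u) (hd : 0 < d) (h2 : p = 2 → 2 ≤ u)
    (k : Type*) [Field k] [CharP k p] (a : MonoidAlgebra k ↥(CS p u d)) (ha : a ≠ 0) :
    Filter.Tendsto
      (fun n : ℕ =>
        (Module.finrank k
            ↥(LinearMap.ker (LinearMap.mulLeft k (csQuotHom k p u d n a))) : ℝ) /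
          ((csSub p u d n).index : ℝ))
      Filter.atTop (nhds 0) := by
  obtain ⟨t, e₀, hte⟩ := exists_notMem_augPow hu ha
  -- replace `n` by `e + 1`, so that `Γ/Γ_(e+1)` has order `(p ^ e) ^ (d * d)`
  rw [← Filter.tendsto_add_atTop_iff_nat 1]
  have hp : p.Prime := Fact.out
  have hq : Filter.Tendsto (fun e : ℕ => (p : ℝ) ^ e) Filter.atTop Filter.atTop :=
    tendsto_pow_atTop_atTop_of_one_lt (by exact_mod_cast hp.one_lt)
  have hlim : Filter.Tendsto (fun e : ℕ => 1 - (1 - (t : ℝ) / (p : ℝ) ^ e) ^ (d * d))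
      Filter.atTop (nhds 0) := by
    have h1 := ((tendsto_const_nhds (x := (1 : ℝ))).sub
      ((hq.const_div_atTop (t : ℝ)))).pow (d * d)
    simpa using (tendsto_const_nhds (x := (1 : ℝ))).sub h1
  refine tendsto_of_tendsto_of_tendsto_of_le_of_le' tendsto_const_nhds hlim
    (Filter.Eventually.of_forall fun e => by positivity) ?_
  filter_upwards [Filter.eventually_ge_atTop e₀, hq.eventually_ge_atTop (t : ℝ)] with e he hte'
  have hle := finrank_ker_le k e hu h2 (hte e he)
  have hindex : (csSub p u d (e + 1)).index = (p ^ e) ^ (d * d) := card_quotient hu e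
  have hq0 : (0 : ℝ) < (p : ℝ) ^ e := pow_pos (by exact_mod_cast hp.pos) e
  have htq : t ≤ p ^ e := by exact_mod_cast hte'
  have hle' : (Module.finrank k
      (LinearMap.ker (LinearMap.mulLeft k (csQuotHom k p u d (e + 1) a))) : ℝ) +
      ((p : ℝ) ^ e - t) ^ (d * d) ≤ ((p : ℝ) ^ e) ^ (d * d) := by
    have := (Nat.cast_le (α := ℝ)).2 hle
    push_cast [Nat.cast_sub htq] at this
    exact this
  have hratio : (1 - (t : ℝ) / (p : ℝ) ^ e) ^ (d * d) =
      ((p : ℝ) ^ e - t) ^ (d * d) / ((p : ℝ) ^ e) ^ (d * d) := by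
    rw [← div_pow, sub_div, div_self hq0.ne']
  rw [hindex, hratio, Nat.cast_pow, Nat.cast_pow, div_le_iff₀ (by positivity), sub_mul,
    div_mul_cancel₀ _ (by positivity)]
  linarith
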